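/- Let r ≥ 2 and let P, Q ∈ ℂ[x₁,…,x_m] be homogeneous polynomials of degree r such that det(Hess P) is not the zero polynomial, and such that Q(∇P(w)) = P(w)^{r−1} for all w ∈ ℂ^m. Then for all y ∈ ℂ^m one has ∇P(∇Q(y)) = Q(y)^{r−2} · y. -/

import Mathlib

/-!
Write `g = ∇P` as a tuple of polynomials and `H` for the Hessian matrix of `P`. Differentiating
`Q ∘ g = P ^ (r - 1)` gives `H · (∇Q ∘ g) = (r - 1) P ^ (r - 2) g`, while Euler's identity for the
components of `g` gives `H · x = (r - 1) g`. Since `det H ≠ 0`, `H` can be cancelled over the domain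
`ℂ[x₁, …, x_m]`, so `∇Q(∇P(w)) = P(w) ^ (r - 2) w` (`grad_legendre_comp_grad`). Applying `∇P`, which
is homogeneous of degree `r - 1`, proves the claimed identity at every point `y = ∇P(w)`.

To pass to all `y`, one uses that `∇P` has nonzero Jacobian determinant `det H`, so that its
components are algebraically independent (`eq_zero_of_bind₁_eq_zero`): the polynomials
`∂ᵢP ∘ ∇Q - Q ^ (r - 2) xᵢ` vanish after substituting `∇P`, hence vanish identically.
-/

open MvPolynomial

/-- Iterated partial derivative `∂^α P`. -/
noncomputable def iterPDeriv (m : ℕ) (α : Fin m → ℕ) :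
    MvPolynomial (Fin m) ℂ → MvPolynomial (Fin m) ℂ :=
  (List.ofFn fun i : Fin m => (fun Q => pderiv i Q)^[α i]).foldr (· ∘ ·) id

/-- Gradient map of a polynomial: `w ↦ (∂P/∂x₁(w), …, ∂P/∂x_m(w))`. -/
noncomputable def gradMap (m : ℕ) (P : MvPolynomial (Fin m) ℂ) :
    (Fin m → ℂ) → Fin m → ℂ :=
  fun w i => eval w (pderiv i P)

/-- Determinant of the Hessian matrix `(∂²P/∂xᵢ∂xⱼ)`. -/
noncomputable def hessDet (m : ℕ) (P : MvPolynomial (Fin m) ℂ) : MvPolynomial (Fin m) ℂ :=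
  Matrix.det (Matrix.of fun i j : Fin m => pderiv i (pderiv j P))

/-- Directional derivative `D_v = v₁ ∂/∂x₁ + ⋯ + v_m ∂/∂x_m`. -/
noncomputable def dirDeriv (m : ℕ) (v : Fin m → ℂ) :
    MvPolynomial (Fin m) ℂ → MvPolynomial (Fin m) ℂ :=
  fun Q => ∑ i : Fin m, v i • pderiv i Q

/-- The chain rule for substitution of polynomials. -/
lemma pderiv_bind₁ {m : ℕ} (g : Fin m → MvPolynomial (Fin m) ℂ) (F : MvPolynomial (Fin m) ℂ)
    (j : Fin m) :
    pderiv j (bind₁ g F) = ∑ i, pderiv j (g i) * bind₁ g (pderiv i F) := by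
  induction F using MvPolynomial.induction_on with
  | C a => simp
  | add p q hp hq => simp [hp, hq, mul_add, Finset.sum_add_distrib]
  | mul_X p k hp =>
    simp only [map_mul, pderiv_mul, hp, bind₁_X_right, map_add, mul_add, Finset.sum_add_distrib,
      pderiv_X, Finset.sum_mul]
    refine congrArg₂ (· + ·) ?_ ?_
    · exact Finset.sum_congr rfl fun i _ => by ring
    · rw [Finset.sum_eq_single k]
      · simp [mul_comm]
      · intro i _ hik
        simp [Pi.single_eq_of_ne hik.symm]
      · simp

lemma pderiv_comm' {m : ℕ} (F : MvPolynomial (Fin m) ℂ) (i j : Fin m) :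
    pderiv i (pderiv j F) = pderiv j (pderiv i F) := by
  ext d
  simp only [coeff_pderiv, Finsupp.add_apply]
  rcases eq_or_ne i j with rfl | h
  · rfl
  · rw [add_right_comm d]
    simp [h, h.symm]
    ring

/-- The Jacobian criterion in characteristic zero: a tuple of polynomials with nonzero Jacobian
determinant satisfies no polynomial relation. A relation `F ∘ g = 0` differentiates to
`∂ᵢF ∘ g = 0`, so by induction on the degree all `∂ᵢF` vanish and `F` is constant. -/
lemma eq_zero_of_bind₁_eq_zero {m : ℕ} (g : Fin m → MvPolynomial (Fin m) ℂ)
    (hg : (Matrix.of fun j i => pderiv j (g i)).det ≠ 0) (F : MvPolynomial (Fin m) ℂ)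
    (hF : bind₁ g F = 0) : F = 0 := by
  have key : ∀ (n : ℕ) (F : MvPolynomial (Fin m) ℂ),
      (∀ d : Fin m →₀ ℕ, n ≤ d.degree → coeff d F = 0) → bind₁ g F = 0 → F = 0 := by
    intro n
    induction n with
    | zero =>
      intro F h _
      ext d
      simpa using h d (Nat.zero_le _)
    | succ n ih =>
      intro F h hF
      have hv : (fun i => bind₁ g (pderiv i F)) = 0 := by
        refine Matrix.eq_zero_of_mulVec_eq_zero hg ?_
        ext1 j
        have := pderiv_bind₁ g F j
        rw [hF, map_zero] at this
        simpa [Matrix.mulVec, dotProduct] using this.symm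
      have hp : ∀ i, pderiv i F = 0 := fun i => by
        refine ih _ (fun d hd => ?_) (congrFun hv i)
        rw [coeff_pderiv, h _ (by simpa using hd), zero_mul]
      have hC : F = C (coeff 0 F) := by
        ext d
        rw [coeff_C]
        split_ifs with hd
        · rw [← hd]
        · obtain ⟨i, hi⟩ := Finsupp.ne_iff.mp (Ne.symm hd)
          have h1 := congrArg (coeff (d - Finsupp.single i 1)) (hp i)
          rw [coeff_pderiv, coeff_zero, tsub_add_cancel_of_le
            (Finsupp.single_le_iff.mpr (Nat.one_le_iff_ne_zero.mpr hi))] at h1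
          exact (mul_eq_zero.mp h1).resolve_right (Nat.cast_add_one_ne_zero _)
      rw [hC, bind₁_C_right] at hF
      rw [hC, hF]
  exact key (F.totalDegree + 1) F (fun d hd => coeff_eq_zero_of_totalDegree_lt hd) hF

/-- The opposite composition: `∇Q(∇P(w)) = P(w) ^ (r - 2) w`, as an identity of polynomials. -/
lemma grad_legendre_comp_grad {m r : ℕ} (hr : 2 ≤ r) {P Q : MvPolynomial (Fin m) ℂ}
    (hP : P.IsHomogeneous r) (hHess : hessDet m P ≠ 0)
    (hLeg : bind₁ (fun i => pderiv i P) Q = P ^ (r - 1)) (k : Fin m) :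
    bind₁ (fun i => pderiv i P) (pderiv k Q) = P ^ (r - 2) * X k := by
  have hv : (fun k => bind₁ (fun i => pderiv i P) (pderiv k Q) - P ^ (r - 2) * X k) = 0 := by
    refine Matrix.eq_zero_of_mulVec_eq_zero hHess ?_
    ext1 j
    have h1 := pderiv_bind₁ (fun i => pderiv i P) Q j
    have h2 := (hP.pderiv (i := j)).sum_X_mul_pderiv
    rw [hLeg, pderiv_pow, show r - 1 - 1 = r - 2 by omega] at h1
    simp only [Matrix.mulVec, dotProduct, Matrix.of_apply, Pi.zero_apply, mul_sub,
      Finset.sum_sub_distrib]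
    rw [← h1, sub_eq_zero]
    calc _ = P ^ (r - 2) * ((r - 1) • pderiv j P) := by rw [nsmul_eq_mul]; ring
      _ = _ := by
        rw [← h2, Finset.mul_sum]
        refine Finset.sum_congr rfl fun i _ => ?_
        rw [pderiv_comm' P i j]
        ring
  exact sub_eq_zero.mp (congrFun hv k)

/-- A homogeneous polynomial is homogeneous under substitution of a scalar multiple. -/
lemma bind₁_mul_of_isHomogeneous {m n : ℕ} {F : MvPolynomial (Fin m) ℂ} (hF : F.IsHomogeneous n)
    (c : MvPolynomial (Fin m) ℂ) (g : Fin m → MvPolynomial (Fin m) ℂ) :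
    bind₁ (fun i => c * g i) F = c ^ n * bind₁ g F := by
  simp only [bind₁, aeval_def, eval₂_eq, Finset.mul_sum]
  refine Finset.sum_congr rfl fun d hd => ?_
  have hdeg : ∑ i ∈ d.support, d i = n := by
    exact (hF.degree_eq_sum_deg_support hd).symm
  simp only [mul_pow, Finset.prod_mul_distrib, Finset.prod_pow_eq_pow_sum, hdeg]
  ring

lemma eval_bind₁' {m : ℕ} (g : Fin m → MvPolynomial (Fin m) ℂ) (F : MvPolynomial (Fin m) ℂ)
    (w : Fin m → ℂ) : eval w (bind₁ g F) = eval (fun i => eval w (g i)) F := by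
  induction F using MvPolynomial.induction_on with
  | C a => simp
  | add p q hp hq => rw [map_add, map_add, hp, hq, map_add]
  | mul_X p k hp => rw [map_mul, map_mul, hp, map_mul, bind₁_X_right, eval_X]

/-- If `Q` is the multiplicative Legendre transform of `P`, i.e. `Q(∇P(w)) = P(w)^(r-1)`,
then `∇P(∇Q(y)) = Q(y)^(r-2) • y`. -/
theorem grad_comp_grad_legendre
    (m r : ℕ) (hr : 2 ≤ r) (P Q : MvPolynomial (Fin m) ℂ)
    (hP : P.IsHomogeneous r) (hQ : Q.IsHomogeneous r)
    (hHess : hessDet m P ≠ 0)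
    (hLeg : ∀ w : Fin m → ℂ, eval (gradMap m P w) Q = (eval w P) ^ (r - 1)) :
    ∀ y : Fin m → ℂ, gradMap m P (gradMap m Q y) = (eval y Q) ^ (r - 2) • y := by
  have hLeg' : bind₁ (fun i => pderiv i P) Q = P ^ (r - 1) := by
    refine MvPolynomial.funext fun w => ?_
    rw [eval_bind₁', map_pow, ← hLeg w]
    rfl
  have key : ∀ i, bind₁ (fun k => pderiv k Q) (pderiv i P) - Q ^ (r - 2) * X i = 0 := by
    intro i
    refine eq_zero_of_bind₁_eq_zero (fun k => pderiv k P) hHess _ ?_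
    rw [map_sub, bind₁_bind₁, map_mul, map_pow, hLeg', bind₁_X_right]
    simp only [grad_legendre_comp_grad hr hP hHess hLeg']
    rw [bind₁_mul_of_isHomogeneous hP.pderiv, ← pow_mul, ← pow_mul, mul_comm (r - 2),
      show bind₁ X (pderiv i P) = pderiv i P from aeval_X_left_apply _, sub_self]
  intro y
  funext i
  have h := congrArg (eval y) (key i)
  rw [map_sub, map_zero, sub_eq_zero, map_mul, map_pow, eval_X, eval_bind₁'] at h
  exact h
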